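/- Fix s ∈ ℝ with 0 < s < 1 and y, ℏ ∈ ℂ with e^{2πi(y+ℏ)} ≠ 1. Writing e(v) = e^{2πiv}, as q → 0⁺ (q real, 0 < q < 1) the following limits hold, all quotients being defined for sufficiently small q: (1) θ_q^{(s)}(−y)·θ_q(ℏ)/(θ_q(y+ℏ)·θ_q^{(s)}(0)) → (1 − e(−ℏ))/(1 − e(−y)e(−ℏ)), i.e. P(sτ, y) tends to that value; (2) θ_q^{(s)}(ℏ)·θ_q(y)/(θ_q(y+ℏ)·θ_q^{(s)}(0)) → (1 − e(−y))·e(−ℏ)/(1 − e(−y)e(−ℏ)), i.e. the limit of Q(sτ, y); (3) θ_q^{(−s)}(−y)·θ_q(ℏ)/(θ_q(y+ℏ)·θ_q^{(−s)}(0)) → (1 − e(−ℏ))·e(−y)/(1 − e(−y)e(−ℏ)), i.e. the limit of P(−sτ, y); (4) θ_q^{(−s)}(ℏ)·θ_q(y)/(θ_q(y+ℏ)·θ_q^{(−s)}(0)) → (1 − e(−y))/(1 − e(−y)e(−ℏ)), i.e. the limit of Q(−sτ, y). -/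

import Mathlib

open Complex Filter

/-- The Jacobi theta function `θ_q(v) = (e^{πiv} − e^{−πiv})·∏_{n≥1} (1 − qⁿe^{2πiv})(1 − qⁿe^{−2πiv})`. -/
noncomputable def jacobiThetaFn (q v : ℂ) : ℂ :=
  (Complex.exp (Real.pi * I * v) - Complex.exp (-(Real.pi * I * v))) *
    ∏' n : ℕ, ((1 - q ^ (n + 1) * Complex.exp (2 * Real.pi * I * v)) *
      (1 - q ^ (n + 1) * Complex.exp (-(2 * Real.pi * I * v))))

/-- The shifted theta value `θ_q^{(s)}(v)`, representing `θ(v + sτ)` for real `0 < q < 1`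
(`q = e^{2πiτ}`, `q^s` the positive real power):
`(q^{s/2}e^{πiv} − q^{−s/2}e^{−πiv})·∏_{n≥1}(1 − q^{n+s}e^{2πiv})(1 − q^{n−s}e^{−2πiv})`. -/
noncomputable def thetaShift (s : ℝ) (q : ℝ) (v : ℂ) : ℂ :=
  (((q ^ (s / 2) : ℝ) : ℂ) * Complex.exp (Real.pi * I * v) -
      ((q ^ (-s / 2) : ℝ) : ℂ) * Complex.exp (-(Real.pi * I * v))) *
    ∏' n : ℕ, ((1 - ((q ^ (((n : ℝ) + 1) + s) : ℝ) : ℂ) * Complex.exp (2 * Real.pi * I * v)) *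
      (1 - ((q ^ (((n : ℝ) + 1) - s) : ℝ) : ℂ) * Complex.exp (-(2 * Real.pi * I * v))))

/-- `e(v) = e^{2πiv}`. -/
noncomputable def eFn (v : ℂ) : ℂ := Complex.exp (2 * Real.pi * I * v)

open Topology

lemma tendsto_coe_rpow_nhdsGT_zero {r : ℝ} (hr : 0 < r) :
    Tendsto (fun q : ℝ => ((q ^ r : ℝ) : ℂ)) (𝓝[>] 0) (𝓝 0) := by
  have := (Real.continuousAt_rpow_const 0 r (Or.inr hr.le)).tendsto
  rw [Real.zero_rpow hr.ne'] at this
  exact (continuous_ofReal.tendsto' 0 0 ofReal_zero).comp (this.mono_left nhdsWithin_le_nhds)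

/-- The infinite product in `thetaShift s q v` tends to `1` as `q → 0⁺`. -/
lemma tendsto_tprod_thetaShift {s : ℝ} (hs : |s| < 1) (a b : ℂ) :
    Tendsto (fun q : ℝ => ∏' n : ℕ, ((1 - ((q ^ (((n : ℝ) + 1) + s) : ℝ) : ℂ) * a) *
      (1 - ((q ^ (((n : ℝ) + 1) - s) : ℝ) : ℂ) * b))) (𝓝[>] 0) (𝓝 1) := by
  obtain ⟨hs1, hs2⟩ := abs_lt.mp hs
  have rpow_le : ∀ q : ℝ, 0 < q → q < 1 / 2 → ∀ (n : ℕ) (t : ℝ), -1 < t →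
      ‖((q ^ ((n : ℝ) + 1 + t) : ℝ) : ℂ)‖ ≤ (1 / 2) ^ n := by
    intro q h0 h1 n t ht
    rw [norm_real, Real.norm_of_nonneg (by positivity)]
    calc q ^ ((n : ℝ) + 1 + t) ≤ q ^ (n : ℝ) :=
          Real.rpow_le_rpow_of_exponent_ge h0 (by linarith) (by linarith)
      _ = q ^ n := Real.rpow_natCast q n
      _ ≤ (1 / 2) ^ n := by gcongr
  have key := tendsto_tprod_one_add_of_dominated_convergence (𝓕 := 𝓝[>] (0 : ℝ))
    (f := fun q n => (1 - ((q ^ (((n : ℝ) + 1) + s) : ℝ) : ℂ) * a) *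
      (1 - ((q ^ (((n : ℝ) + 1) - s) : ℝ) : ℂ) * b) - 1) (g := fun _ : ℕ => 0)
    (bound := fun n => (1 / 2 : ℝ) ^ n * (‖a‖ + ‖b‖ + ‖a‖ * ‖b‖))
    ((summable_geometric_of_lt_one (by norm_num) (by norm_num)).mul_right _) ?_ ?_
  · simpa using key
  · intro n
    have hn : (0 : ℝ) ≤ n := n.cast_nonneg
    have hA := (tendsto_coe_rpow_nhdsGT_zero (r := (n : ℝ) + 1 + s) (by linarith)).mul_const a
    have hB := (tendsto_coe_rpow_nhdsGT_zero (r := (n : ℝ) + 1 - s) (by linarith)).mul_const b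
    simpa using ((hA.const_sub 1).mul (hB.const_sub 1)).sub_const 1
  · filter_upwards [Ioo_mem_nhdsGT (show (0 : ℝ) < 1 / 2 by norm_num)] with q hq n
    have hA := rpow_le q hq.1 hq.2 n s hs1
    have hB := rpow_le q hq.1 hq.2 n (-s) (by linarith)
    rw [← sub_eq_add_neg] at hB
    generalize ((q ^ ((n : ℝ) + 1 + s) : ℝ) : ℂ) = A at *
    generalize ((q ^ ((n : ℝ) + 1 - s) : ℝ) : ℂ) = B at *
    have hB1 : ‖B‖ ≤ 1 := hB.trans (pow_le_one₀ (by norm_num) (by norm_num))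
    calc ‖(1 - A * a) * (1 - B * b) - 1‖ = ‖-(A * a) + -(B * b) + A * B * (a * b)‖ := by
          congr 1; ring
      _ ≤ ‖A‖ * ‖a‖ + ‖B‖ * ‖b‖ + ‖A‖ * ‖B‖ * (‖a‖ * ‖b‖) := by
          refine (norm_add₃_le).trans_eq ?_
          simp only [norm_neg, norm_mul]
      _ ≤ (1 / 2) ^ n * ‖a‖ + (1 / 2) ^ n * ‖b‖ + (1 / 2) ^ n * 1 * (‖a‖ * ‖b‖) := by gcongr
      _ = (1 / 2) ^ n * (‖a‖ + ‖b‖ + ‖a‖ * ‖b‖) := by ring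

lemma tendsto_jacobiThetaFn (v : ℂ) :
    Tendsto (fun q : ℝ => jacobiThetaFn (q : ℂ) v) (𝓝[>] 0)
      (𝓝 (Complex.exp (Real.pi * I * v) - Complex.exp (-(Real.pi * I * v)))) := by
  have key := (tendsto_tprod_thetaShift (s := 0) (by simp) (Complex.exp (2 * Real.pi * I * v))
    (Complex.exp (-(2 * Real.pi * I * v)))).const_mul
      (Complex.exp (Real.pi * I * v) - Complex.exp (-(Real.pi * I * v)))
  rw [mul_one] at key
  refine key.congr fun q => ?_
  have hpow (n : ℕ) : q ^ ((n : ℝ) + 1) = q ^ (n + 1) := by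
    exact_mod_cast Real.rpow_natCast q (n + 1)
  simp only [jacobiThetaFn, add_zero, sub_zero, hpow, ofReal_pow]

lemma thetaShift_neg_left (s q : ℝ) (v : ℂ) : thetaShift (-s) q v = -thetaShift s q (-v) := by
  simp only [thetaShift, mul_neg, neg_neg, sub_neg_eq_add, ← sub_eq_add_neg, ← neg_mul, neg_sub]
  congr 1
  exact tprod_congr fun n => mul_comm _ _

/-- For `0 < s < 1` the leading term of `thetaShift s q v` is `-q^{-s/2} e^{-πiv}`. -/
lemma tendsto_rpow_mul_thetaShift {s : ℝ} (hs0 : 0 < s) (hs1 : s < 1) (v : ℂ) :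
    Tendsto (fun q : ℝ => ((q ^ (s / 2) : ℝ) : ℂ) * thetaShift s q v) (𝓝[>] 0)
      (𝓝 (-Complex.exp (-(Real.pi * I * v)))) := by
  have key := (((tendsto_coe_rpow_nhdsGT_zero hs0).mul_const (Complex.exp (Real.pi * I * v))).sub_const
    (Complex.exp (-(Real.pi * I * v)))).mul
      (tendsto_tprod_thetaShift (abs_lt.mpr ⟨by linarith, hs1⟩) (Complex.exp (2 * Real.pi * I * v))
        (Complex.exp (-(2 * Real.pi * I * v))))
  rw [zero_mul, zero_sub, mul_one] at key
  refine key.congr' ?_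
  filter_upwards [self_mem_nhdsWithin] with q hq
  have hq : 0 < q := hq
  have h1 : ((q ^ s : ℝ) : ℂ) = ((q ^ (s / 2) : ℝ) : ℂ) * ((q ^ (s / 2) : ℝ) : ℂ) := by
    rw [← ofReal_mul, ← Real.rpow_add hq, add_halves]
  have h2 : ((q ^ (s / 2) : ℝ) : ℂ) * ((q ^ (-s / 2) : ℝ) : ℂ) = 1 := by
    rw [← ofReal_mul, ← Real.rpow_add hq, neg_div, add_neg_cancel, Real.rpow_zero, ofReal_one]
  rw [thetaShift, ← mul_assoc, mul_sub, ← mul_assoc, ← mul_assoc, h2, ← h1, one_mul]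

lemma eventually_thetaShift_zero_ne_zero {s : ℝ} (hs0 : 0 < s) (hs1 : s < 1) :
    ∀ᶠ q : ℝ in 𝓝[>] 0, thetaShift s q 0 ≠ 0 := by
  filter_upwards [(tendsto_rpow_mul_thetaShift hs0 hs1 0).eventually_ne
    (neg_ne_zero.mpr (Complex.exp_ne_zero _))] with q hq
  exact right_ne_zero_of_mul hq

lemma tendsto_thetaShift_div {s : ℝ} (hs0 : 0 < s) (hs1 : s < 1) (v : ℂ) :
    Tendsto (fun q : ℝ => thetaShift s q v / thetaShift s q 0) (𝓝[>] 0)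
      (𝓝 (Complex.exp (-(Real.pi * I * v)))) := by
  have key := (tendsto_rpow_mul_thetaShift hs0 hs1 v).div (tendsto_rpow_mul_thetaShift hs0 hs1 0)
    (neg_ne_zero.mpr (Complex.exp_ne_zero _))
  rw [mul_zero, neg_zero, Complex.exp_zero, neg_div_neg_eq, div_one] at key
  refine key.congr' ?_
  filter_upwards [self_mem_nhdsWithin] with q hq
  exact mul_div_mul_left _ _ (ofReal_ne_zero.mpr (Real.rpow_pos_of_pos hq _).ne')

lemma tendsto_thetaShift_neg_div {s : ℝ} (hs0 : 0 < s) (hs1 : s < 1) (v : ℂ) :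
    Tendsto (fun q : ℝ => thetaShift (-s) q v / thetaShift (-s) q 0) (𝓝[>] 0)
      (𝓝 (Complex.exp (Real.pi * I * v))) := by
  simpa [thetaShift_neg_left, neg_div_neg_eq] using tendsto_thetaShift_div hs0 hs1 (-v)

lemma eFn_neg (v : ℂ) : eFn (-v) = Complex.exp (-(Real.pi * I * v)) ^ 2 := by
  rw [eFn, ← Complex.exp_nat_mul]
  congr 1
  push_cast
  ring

/-- limits of `P(±sτ, y)` and `Q(±sτ, y)` as `q → 0⁺`, for `0 < s < 1` and
`e^{2πi(y+ℏ)} ≠ 1`, together with the eventual nonvanishing of the denominators. -/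
theorem stmt18 (s : ℝ) (hs0 : 0 < s) (hs1 : s < 1) (y h : ℂ)
    (hyh : Complex.exp (2 * Real.pi * I * (y + h)) ≠ 1) :
    (∀ᶠ q : ℝ in nhdsWithin (0 : ℝ) (Set.Ioi 0),
      jacobiThetaFn (q : ℂ) (y + h) ≠ 0 ∧ thetaShift s q 0 ≠ 0 ∧ thetaShift (-s) q 0 ≠ 0) ∧
    Tendsto (fun q : ℝ =>
        thetaShift s q (-y) * jacobiThetaFn (q : ℂ) h /
          (jacobiThetaFn (q : ℂ) (y + h) * thetaShift s q 0))
      (nhdsWithin (0 : ℝ) (Set.Ioi 0))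
      (nhds ((1 - eFn (-h)) / (1 - eFn (-y) * eFn (-h)))) ∧
    Tendsto (fun q : ℝ =>
        thetaShift s q h * jacobiThetaFn (q : ℂ) y /
          (jacobiThetaFn (q : ℂ) (y + h) * thetaShift s q 0))
      (nhdsWithin (0 : ℝ) (Set.Ioi 0))
      (nhds ((1 - eFn (-y)) * eFn (-h) / (1 - eFn (-y) * eFn (-h)))) ∧
    Tendsto (fun q : ℝ =>
        thetaShift (-s) q (-y) * jacobiThetaFn (q : ℂ) h /
          (jacobiThetaFn (q : ℂ) (y + h) * thetaShift (-s) q 0))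
      (nhdsWithin (0 : ℝ) (Set.Ioi 0))
      (nhds ((1 - eFn (-h)) * eFn (-y) / (1 - eFn (-y) * eFn (-h)))) ∧
    Tendsto (fun q : ℝ =>
        thetaShift (-s) q h * jacobiThetaFn (q : ℂ) y /
          (jacobiThetaFn (q : ℂ) (y + h) * thetaShift (-s) q 0))
      (nhdsWithin (0 : ℝ) (Set.Ioi 0))
      (nhds ((1 - eFn (-y)) / (1 - eFn (-y) * eFn (-h)))) := by
  have exp_mul_exp_neg (v : ℂ) :
      Complex.exp (Real.pi * I * v) * Complex.exp (-(Real.pi * I * v)) = 1 := by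
    rw [← Complex.exp_add, add_neg_cancel, Complex.exp_zero]
  have hden : Complex.exp (Real.pi * I * (y + h)) - Complex.exp (-(Real.pi * I * (y + h))) ≠ 0 := by
    intro h0
    apply hyh
    rw [show 2 * (Real.pi : ℂ) * I * (y + h) = Real.pi * I * (y + h) + Real.pi * I * (y + h) by
      ring, Complex.exp_add]
    nth_rewrite 2 [sub_eq_zero.mp h0]
    exact exp_mul_exp_neg _
  have hJ := tendsto_jacobiThetaFn (y + h)
  have hy := exp_mul_exp_neg y
  have hh := exp_mul_exp_neg h
  have hadd : Complex.exp (Real.pi * I * (y + h)) =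
      Complex.exp (Real.pi * I * y) * Complex.exp (Real.pi * I * h) := by
    rw [mul_add, Complex.exp_add]
  have hadd' : Complex.exp (-(Real.pi * I * (y + h))) =
      Complex.exp (-(Real.pi * I * y)) * Complex.exp (-(Real.pi * I * h)) := by
    rw [mul_add, neg_add, Complex.exp_add]
  have hden' : 1 - eFn (-y) * eFn (-h) =
      Complex.exp (-(Real.pi * I * y)) * Complex.exp (-(Real.pi * I * h)) *
        (Complex.exp (Real.pi * I * (y + h)) - Complex.exp (-(Real.pi * I * (y + h)))) := by
    rw [eFn_neg, eFn_neg, hadd, hadd']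
    linear_combination (-1 : ℂ) * hy -
      Complex.exp (Real.pi * I * y) * Complex.exp (-(Real.pi * I * y)) * hh
  have hden0 : 1 - eFn (-y) * eFn (-h) ≠ 0 := by
    rw [hden']
    exact mul_ne_zero (mul_ne_zero (Complex.exp_ne_zero _) (Complex.exp_ne_zero _)) hden
  have limit_of_ratio : ∀ {t : ℝ} {u v r c : ℂ},
      Tendsto (fun q : ℝ => thetaShift t q u / thetaShift t q 0) (𝓝[>] 0) (𝓝 r) →
      Complex.exp (-(Real.pi * I * y)) * Complex.exp (-(Real.pi * I * h)) *
        (r * (Complex.exp (Real.pi * I * v) - Complex.exp (-(Real.pi * I * v)))) = c →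
      Tendsto (fun q : ℝ => thetaShift t q u * jacobiThetaFn (q : ℂ) v /
          (jacobiThetaFn (q : ℂ) (y + h) * thetaShift t q 0)) (𝓝[>] 0)
        (𝓝 (c / (1 - eFn (-y) * eFn (-h)))) := by
    intro t u v r c hr hc
    have key := hr.mul ((tendsto_jacobiThetaFn v).div hJ hden)
    rw [← hc, hden', mul_div_mul_left _ _
      (mul_ne_zero (Complex.exp_ne_zero _) (Complex.exp_ne_zero _)), mul_div_assoc]
    refine key.congr fun q => ?_
    rw [Pi.div_apply, div_mul_div_comm, mul_comm (thetaShift t q 0)]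
  refine ⟨?_, limit_of_ratio (tendsto_thetaShift_div hs0 hs1 (-y)) ?_,
    limit_of_ratio (tendsto_thetaShift_div hs0 hs1 h) ?_,
    limit_of_ratio (tendsto_thetaShift_neg_div hs0 hs1 (-y)) ?_,
    limit_of_ratio (tendsto_thetaShift_neg_div hs0 hs1 h) ?_⟩
  · filter_upwards [hJ.eventually_ne hden, eventually_thetaShift_zero_ne_zero hs0 hs1]
      with q hq1 hq2
    exact ⟨hq1, hq2, by simpa [thetaShift_neg_left] using hq2⟩
  all_goals
    simp only [eFn_neg, mul_neg, neg_neg]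
    generalize Complex.exp (Real.pi * I * y) = Y at *
    generalize Complex.exp (-(Real.pi * I * y)) = Y' at *
    generalize Complex.exp (Real.pi * I * h) = H at *
    generalize Complex.exp (-(Real.pi * I * h)) = H' at *
    clear * - hy hh
    grind
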